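/- arXiv:1606.09060 — 5 statements merged into one kernel-verified Lean document; each statement's English description precedes it below -/
import Mathlib

section
/- Let E be a normed vector space over ℂ, let ι be an index type, and let v : ι → (E → E) be a family of vector fields, each differentiable on E. Assume the family is involutive in the pointwise sense: for all i, j ∈ ι and all x ∈ E, the bracket [vᵢ,vⱼ](x) lies in the ℂ-linear span of {v_k(x) : k ∈ ι}. Let ω : E → (E →L[ℂ] ℂ) be a differentiable 1-form with ω(y)(vᵢ(y)) = 0 for all i ∈ ι and all y ∈ E. Then dω(x)(vᵢ(x), vⱼ(x)) = 0 for all i, j ∈ ι and all x ∈ E. -/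
/-- If a family of vector fields is involutive (all brackets lie pointwise in the
span of the family), then any differentiable 1-form `ω` annihilating the family
satisfies `dω(x)(vᵢ(x), vⱼ(x)) = 0` for all `i, j, x`, where
`dω(x)(a,b) = (D_xω(a))(b) − (D_xω(b))(a)` and
`[vᵢ,vⱼ](x) = D_x vⱼ(vᵢ(x)) − D_x vᵢ(vⱼ(x))`. -/
theorem dOmega_vanishes_on_involutive_family
    {E : Type*} [NormedAddCommGroup E] [NormedSpace ℂ E]
    {ι : Type*} (v : ι → E → E)
    (hv : ∀ i, Differentiable ℂ (v i))
    (hinv : ∀ i j : ι, ∀ x : E,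
      (fderiv ℂ (v j) x (v i x) - fderiv ℂ (v i) x (v j x))
        ∈ Submodule.span ℂ (Set.range fun k => v k x))
    (ω : E → (E →L[ℂ] ℂ)) (hω : Differentiable ℂ ω)
    (hann : ∀ (i : ι) (y : E), ω y (v i y) = 0) :
    ∀ (i j : ι) (x : E),
      (fderiv ℂ ω x (v i x)) (v j x) - (fderiv ℂ ω x (v j x)) (v i x) = 0 := by
  intro i j x
  have key : ∀ (k : ι) (a : E),
      ω x (fderiv ℂ (v k) x a) + (fderiv ℂ ω x a) (v k x) = 0 := by
    intro k a
    have h1 := (hω x).hasFDerivAt.clm_apply (hv k x).hasFDerivAt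
    have h2 : (fun y => ω y (v k y)) = fun _ => (0 : ℂ) := funext (hann k)
    rw [h2] at h1
    have h3 := h1.unique (hasFDerivAt_const (0 : ℂ) x)
    have h4 := congrArg (fun L : E →L[ℂ] ℂ => L a) h3
    simpa using h4
  have hle : Submodule.span ℂ (Set.range fun k => v k x) ≤
      LinearMap.ker (ω x : E →ₗ[ℂ] ℂ) := by
    rw [Submodule.span_le]
    rintro _ ⟨k, rfl⟩
    exact hann k x
  have h0 : ω x (fderiv ℂ (v j) x (v i x) - fderiv ℂ (v i) x (v j x)) = 0 :=
    hle (hinv i j x)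
  rw [map_sub] at h0
  linear_combination key j (v i x) - key i (v j x) - h0
end

section
/- Let U ⊆ ℂⁿ be an open set and let v₁, …, v_r : U → ℂⁿ be holomorphic vector fields such that the vectors v₁(x), …, v_r(x) are linearly independent over ℂ for every x ∈ U. Assume that for every open set V ⊆ U, every holomorphic 1-form ω : V → (ℂⁿ →L[ℂ] ℂ) satisfying ω(y)(vᵢ(y)) = 0 for all i and all y ∈ V, and every x ∈ V, one has dω(x)(vᵢ(x), vⱼ(x)) = 0 for all i, j. Then for every x ∈ U and all i, j, the bracket [vᵢ,vⱼ](x) lies in the ℂ-linear span of {v₁(x), …, v_r(x)}. -/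
/-- Converse implication of Proposition 2.2 in the regular case: if the pointwise
linearly independent holomorphic vector fields `v₁, …, v_r` on an open set
`U ⊆ ℂⁿ` are such that every local holomorphic 1-form annihilating them has
exterior derivative vanishing on them, then all brackets `[vᵢ,vⱼ](x)` lie in the
span of `{v₁(x), …, v_r(x)}`. -/
theorem bracket_mem_span_of_dOmega_vanishes
    {n r : ℕ} (U : Set (Fin n → ℂ)) (hU : IsOpen U)
    (v : Fin r → (Fin n → ℂ) → (Fin n → ℂ))
    (hv : ∀ i, DifferentiableOn ℂ (v i) U)
    (hindep : ∀ x ∈ U, LinearIndependent ℂ (fun i => v i x))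
    (H : ∀ (V : Set (Fin n → ℂ)), IsOpen V → V ⊆ U →
      ∀ ω : (Fin n → ℂ) → ((Fin n → ℂ) →L[ℂ] ℂ), DifferentiableOn ℂ ω V →
        (∀ (i : Fin r), ∀ y ∈ V, ω y (v i y) = 0) →
        ∀ x ∈ V, ∀ i j : Fin r,
          (fderiv ℂ ω x (v i x)) (v j x) - (fderiv ℂ ω x (v j x)) (v i x) = 0) :
    ∀ x ∈ U, ∀ i j : Fin r,
      (fderiv ℂ (v j) x (v i x) - fderiv ℂ (v i) x (v j x))
        ∈ Submodule.span ℂ (Set.range fun k => v k x) := by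
  intro x hx i j
  by_contra hb
  obtain ⟨f0, hf0b, hf0⟩ := Submodule.exists_le_ker_of_notMem hb
  set f : (Fin n → ℂ) →L[ℂ] ℂ := LinearMap.toContinuousLinearMap f0 with hf
  let A : (Fin n → ℂ) → ((Fin r → ℂ) →L[ℂ] (Fin n → ℂ)) := fun y =>
    ∑ k, ContinuousLinearMap.smulRightL ℂ (Fin r → ℂ) (Fin n → ℂ)
      (ContinuousLinearMap.proj k) (v k y)
  have hA : ∀ y c, A y c = ∑ k, c k • v k y := by
    intro y c
    simp [A, ContinuousLinearMap.sum_apply]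
  have hAs : ∀ y k, A y (Pi.single k 1) = v k y := by
    intro y k
    rw [hA]
    simp [Pi.single_apply]
  have hAd : DifferentiableOn ℂ A U := by
    refine DifferentiableOn.fun_sum fun k _ => ?_
    exact (ContinuousLinearMap.differentiable _).comp_differentiableOn (hv k)
  have hinj : LinearMap.ker (A x : (Fin r → ℂ) →ₗ[ℂ] (Fin n → ℂ)) = ⊥ := by
    rw [LinearMap.ker_eq_bot']
    intro c hc
    have hc' : ∑ k, c k • v k x = 0 := by rw [← hA]; exact hc
    exact funext (Fintype.linearIndependent_iff.1 (hindep x hx) c hc')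
  obtain ⟨P0, hP0⟩ := LinearMap.exists_leftInverse_of_injective _ hinj
  set P : (Fin n → ℂ) →L[ℂ] (Fin r → ℂ) := LinearMap.toContinuousLinearMap P0 with hP
  let M : (Fin n → ℂ) → ((Fin r → ℂ) →L[ℂ] (Fin r → ℂ)) := fun y => P ∘L A y
  have hMd : DifferentiableOn ℂ M U :=
    (differentiableOn_const P).clm_comp hAd
  have hMx : M x = 1 := by
    ext1 c
    exact LinearMap.congr_fun hP0 c
  let V : Set (Fin n → ℂ) := U ∩ M ⁻¹' {T | IsUnit T}
  have hVo : IsOpen V := hMd.continuousOn.isOpen_inter_preimage hU Units.isOpen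
  have hVU : V ⊆ U := Set.inter_subset_left
  have hxV : x ∈ V := ⟨hx, by simp [hMx]⟩
  let ω : (Fin n → ℂ) → ((Fin n → ℂ) →L[ℂ] ℂ) := fun y =>
    f - f ∘L (A y ∘L (Ring.inverse (M y) ∘L P))
  have hinv : DifferentiableOn ℂ (fun y => Ring.inverse (M y)) V := by
    intro y hy
    obtain ⟨u, hu⟩ := hy.2
    have h1 : DifferentiableAt ℂ Ring.inverse (M y) := by
      rw [← hu]; exact (hasFDerivAt_ringInverse (𝕜 := ℂ) u).differentiableAt
    exact h1.comp_differentiableWithinAt y ((hMd.mono hVU) y hy)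
  have hωd : DifferentiableOn ℂ ω V := by
    refine (differentiableOn_const f).sub ?_
    exact (differentiableOn_const f).clm_comp
      ((hAd.mono hVU).clm_comp (hinv.clm_comp (differentiableOn_const P)))
  have hω0 : ∀ (k : Fin r), ∀ y ∈ V, ω y (v k y) = 0 := by
    intro k y hy
    have h1 : Ring.inverse (M y) * M y = 1 := Ring.inverse_mul_cancel _ hy.2
    have h2 : Ring.inverse (M y) (P (A y (Pi.single k 1))) = Pi.single k 1 :=
      DFunLike.congr_fun h1 (Pi.single k 1)
    rw [hAs] at h2
    change f (v k y) - f (A y (Ring.inverse (M y) (P (v k y)))) = 0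
    rw [h2, hAs, sub_self]
  have hfv : ∀ k, f (v k x) = 0 := fun k =>
    hf0 (Submodule.subset_span ⟨k, rfl⟩)
  have hωx : ∀ w, ω x w = f w := by
    intro w
    change f w - f (A x (Ring.inverse (M x) (P w))) = f w
    rw [hA, map_sum]
    simp [hfv]
  have hd : ∀ k w, (fderiv ℂ ω x w) (v k x) + f (fderiv ℂ (v k) x w) = 0 := by
    intro k w
    have h1 := (hωd.differentiableAt (hVo.mem_nhds hxV)).hasFDerivAt
    have h2 := ((hv k).differentiableAt (hU.mem_nhds hx)).hasFDerivAt
    have h3 := h1.clm_apply h2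
    have h4 : (fun y => ω y (v k y)) =ᶠ[nhds x] fun _ => (0 : ℂ) :=
      Filter.eventuallyEq_of_mem (hVo.mem_nhds hxV) (hω0 k)
    have h5 := h3.unique ((hasFDerivAt_const (0 : ℂ) x).congr_of_eventuallyEq h4)
    have h6 := DFunLike.congr_fun h5 w
    simp [hωx] at h6
    rw [add_comm]; exact h6
  have e := H V hVo hVU ω hωd hω0 x hxV i j
  have e1 := hd j (v i x)
  have e2 := hd i (v j x)
  apply hf0b
  change f _ = 0
  rw [map_sub]
  linear_combination e1 - e2 - e
end

section
/- Let R be a commutative ℂ-algebra, let ε : R →ₐ[ℂ] ℂ be a ℂ-algebra homomorphism, let r be a natural number, and let v₁, …, v_r be ℂ-linear derivations of R such that ε(vⱼ(f)) = 0 for every f ∈ R and every j. Then there exist no ℂ-linear endomorphisms A₁, …, A_r, B₁, …, B_r of R such that the identity map of R equals Σⱼ (vⱼ ∘ Aⱼ + Bⱼ ∘ vⱼ). -/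
/-- Step (B) of Theorem 3.6: if `v₁, …, v_r` are derivations of a commutative
`ℂ`-algebra `R` whose values all lie in the kernel of a character
`ε : R →ₐ[ℂ] ℂ`, then the identity of `R` cannot be written as
`Σⱼ (vⱼ ∘ Aⱼ + Bⱼ ∘ vⱼ)` with `Aⱼ, Bⱼ` `ℂ`-linear endomorphisms of `R`. -/
theorem no_decomposition_of_id_derivations
    {R : Type*} [CommRing R] [Algebra ℂ R]
    (ε : R →ₐ[ℂ] ℂ) {r : ℕ} (v : Fin r → Derivation ℂ R R)
    (hv : ∀ (j : Fin r) (f : R), ε (v j f) = 0) :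
    ¬ ∃ A B : Fin r → (R →ₗ[ℂ] R),
        (LinearMap.id : R →ₗ[ℂ] R) =
          ∑ j : Fin r, ((v j).toLinearMap ∘ₗ A j + B j ∘ₗ (v j).toLinearMap) := by
  rintro ⟨A, B, h⟩
  have h1 := congrArg (fun L : R →ₗ[ℂ] R => ε (L 1)) h
  simp [LinearMap.sum_apply, map_sum, hv] at h1
end

section
/- Let R = ℂ[x₁, …, xₙ] be the multivariate polynomial ring (MvPolynomial over Fin n and ℂ), let r be a natural number, and let v₁, …, v_r be ℂ-linear derivations of R such that for every j and every variable xᵢ, the polynomial vⱼ(xᵢ) has zero constant term (i.e., evaluates to 0 at the origin). Then there exist no ℂ-linear endomorphisms A₁, …, A_r, B₁, …, B_r of R such that the identity map of R equals Σⱼ (vⱼ ∘ Aⱼ + Bⱼ ∘ vⱼ). -/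
/-- Concrete form of step (B) of Theorem 3.6 on `X = ℂⁿ`: if `v₁, …, v_r` are
derivations of `ℂ[x₁, …, xₙ]` whose values on the variables all vanish at the
origin, then the identity map cannot be written as `Σⱼ (vⱼ ∘ Aⱼ + Bⱼ ∘ vⱼ)`
with `Aⱼ, Bⱼ` `ℂ`-linear endomorphisms. -/
theorem no_decomposition_of_id_mvPolynomial
    {n : ℕ} {r : ℕ}
    (v : Fin r → Derivation ℂ (MvPolynomial (Fin n) ℂ) (MvPolynomial (Fin n) ℂ))
    (hv : ∀ (j : Fin r) (i : Fin n),
      MvPolynomial.eval (0 : Fin n → ℂ) (v j (MvPolynomial.X i)) = 0) :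
    ¬ ∃ A B : Fin r → (MvPolynomial (Fin n) ℂ →ₗ[ℂ] MvPolynomial (Fin n) ℂ),
        (LinearMap.id : MvPolynomial (Fin n) ℂ →ₗ[ℂ] MvPolynomial (Fin n) ℂ) =
          ∑ j : Fin r, ((v j).toLinearMap ∘ₗ A j + B j ∘ₗ (v j).toLinearMap) := by
  have key : ∀ (j : Fin r) (p : MvPolynomial (Fin n) ℂ),
      MvPolynomial.eval (0 : Fin n → ℂ) (v j p) = 0 := by
    intro j p
    induction p using MvPolynomial.induction_on with
    | C a =>
      have h : v j (MvPolynomial.C a) = 0 := (v j).map_algebraMap a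
      rw [h, map_zero]
    | add p q hp hq => rw [map_add, map_add, hp, hq, add_zero]
    | mul_X p i hp =>
      rw [Derivation.leibniz]
      simp only [smul_eq_mul, map_add, map_mul, hp, hv, mul_zero, add_zero]
  rintro ⟨A, B, h⟩
  have h1 := congrArg (MvPolynomial.eval (0 : Fin n → ℂ)) (LinearMap.congr_fun h 1)
  simp [LinearMap.sum_apply, -MvPolynomial.eval_zero, -MvPolynomial.eval_zero', key] at h1
end

section
/- Let D be a (possibly noncommutative) ring and let v₁, v₂ ∈ D be elements with v₁v₂ = v₂v₁. Assume that right multiplication by v₁ is injective on D, right multiplication by v₂ is injective on D, and the map induced by right multiplication by v₂ on the quotient additive group D/Dv₁ (well-defined since v₁v₂ = v₂v₁) is injective. Let M = D/(Dv₁ + Dv₂) be the quotient of D by the left ideal generated by v₁ and v₂. Then there is an isomorphism of abelian groups Ext²_D(M, M) ≅ D/(Dv₁ + Dv₂ + v₁D + v₂D), where Dv₁ + Dv₂ + v₁D + v₂D denotes the additive subgroup of D generated by all elements d·v₁, d·v₂, v₁·d, v₂·d for d ∈ D. -/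
open CategoryTheory

universe u

section Resolution

open Limits ZeroObject

universe w w'

variable {C : Type w} [Category.{w'} C] [Abelian C]

/-- The objects of a length two complex. -/
noncomputable def koszulX (P₀ P₁ P₂ : C) : ℕ → C
  | 0 => P₀
  | 1 => P₁
  | 2 => P₂
  | _ + 3 => 0

/-- The differentials of a length two complex. -/
noncomputable def koszulD {P₀ P₁ P₂ : C} (f₁ : P₁ ⟶ P₀) (f₂ : P₂ ⟶ P₁) :
    ∀ n, koszulX P₀ P₁ P₂ (n + 1) ⟶ koszulX P₀ P₁ P₂ n
  | 0 => f₁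
  | 1 => f₂
  | 2 => (0 : (0 : C) ⟶ P₂)
  | _ + 3 => (0 : (0 : C) ⟶ (0 : C))

lemma koszulD_comp {P₀ P₁ P₂ : C} (f₁ : P₁ ⟶ P₀) (f₂ : P₂ ⟶ P₁) (h : f₂ ≫ f₁ = 0) (n : ℕ) :
    koszulD f₁ f₂ (n + 1) ≫ koszulD f₁ f₂ n = 0 := by
  match n with
  | 0 => exact h
  | 1 => exact zero_comp
  | 2 => exact zero_comp
  | _ + 3 => exact zero_comp

/-- A length two complex. -/
noncomputable def koszulComplex {P₀ P₁ P₂ : C} (f₁ : P₁ ⟶ P₀) (f₂ : P₂ ⟶ P₁)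
    (h : f₂ ≫ f₁ = 0) : ChainComplex C ℕ :=
  ChainComplex.of (koszulX P₀ P₁ P₂) (koszulD f₁ f₂) (koszulD_comp f₁ f₂ h)

lemma koszulComplex_d {P₀ P₁ P₂ : C} (f₁ : P₁ ⟶ P₀) (f₂ : P₂ ⟶ P₁)
    (h : f₂ ≫ f₁ = 0) (n : ℕ) :
    (koszulComplex f₁ f₂ h).d (n + 1) n = koszulD f₁ f₂ n :=
  ChainComplex.of_d _ _ _

lemma koszulComplex_exactAt {P₀ P₁ P₂ : C} (f₁ : P₁ ⟶ P₀) (f₂ : P₂ ⟶ P₁)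
    (h : f₂ ≫ f₁ = 0) (hex : (ShortComplex.mk f₂ f₁ h).Exact) [Mono f₂] (n : ℕ) :
    (koszulComplex f₁ f₂ h).ExactAt (n + 1) := by
  rw [HomologicalComplex.exactAt_iff' _ (n + 1 + 1) (n + 1) n (by simp) (by simp)]
  have key : (ShortComplex.mk (koszulD f₁ f₂ (n + 1)) (koszulD f₁ f₂ n)
      (koszulD_comp f₁ f₂ h n)).Exact := by
    match n with
    | 0 => exact hex
    | 1 => exact (ShortComplex.exact_iff_mono (ShortComplex.mk (0 : (0 : C) ⟶ P₂) f₂ zero_comp)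
        rfl).2 ‹_›
    | n + 2 => exact ShortComplex.exact_of_isZero_X₂ _ (isZero_zero C)
  have e₁ := koszulComplex_d f₁ f₂ h (n + 1)
  have e₂ := koszulComplex_d f₁ f₂ h n
  change (ShortComplex.mk ((koszulComplex f₁ f₂ h).d (n + 1 + 1) (n + 1))
    ((koszulComplex f₁ f₂ h).d (n + 1) n) (HomologicalComplex.d_comp_d _ _ _ _)).Exact
  simp only [e₁, e₂]
  exact key

/-- A length two projective resolution. -/
noncomputable def koszulResolution {P₀ P₁ P₂ M : C} [Projective P₀] [Projective P₁]
    [Projective P₂] (f₁ : P₁ ⟶ P₀) (f₂ : P₂ ⟶ P₁) (p : P₀ ⟶ M)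
    (h : f₂ ≫ f₁ = 0) (h' : f₁ ≫ p = 0) (hex : (ShortComplex.mk f₂ f₁ h).Exact)
    (hex' : (ShortComplex.mk f₁ p h').Exact) [Mono f₂] [Epi p] : ProjectiveResolution M where
  complex := koszulComplex f₁ f₂ h
  projective n := by
    match n with
    | 0 => exact (inferInstance : Projective P₀)
    | 1 => exact (inferInstance : Projective P₁)
    | 2 => exact (inferInstance : Projective P₂)
    | _ + 3 => exact (isZero_zero C).projective
  π := (ChainComplex.toSingle₀Equiv _ _).symm ⟨p, by rw [koszulComplex_d]; exact h'⟩
  quasiIso := ⟨fun n => by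
    cases n with
    | zero =>
      rw [ChainComplex.quasiIsoAt₀_iff, ShortComplex.quasiIso_iff_of_zeros']
      · refine (ShortComplex.exact_and_epi_g_iff_of_iso ?_).2 ⟨hex', ‹_›⟩
        refine ShortComplex.isoMk (Iso.refl _) (Iso.refl _) (Iso.refl _) ?_ ?_
        · have := koszulComplex_d f₁ f₂ h 0
          exact (Category.id_comp _).trans (this.symm.trans (Category.comp_id _).symm)
        · refine (Category.id_comp _).trans (Eq.trans ?_ (Category.comp_id _).symm)
          exact (ChainComplex.toSingle₀Equiv_symm_apply_f_zero
            (C := koszulComplex f₁ f₂ h) p _).symm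
      all_goals rfl
    | succ n =>
      rw [quasiIsoAt_iff_exactAt']
      · exact koszulComplex_exactAt f₁ f₂ h hex n
      · apply ChainComplex.exactAt_succ_single_obj⟩

/-- Homology of a short complex with vanishing second map. -/
lemma homology_addEquiv_of_g_zero {R : Type*} [Ring R] (S : ShortComplex (ModuleCat R))
    (hg : S.g = 0) {A : Type*} [AddCommGroup A] (φ : S.X₂ →+ A)
    (hφ : Function.Surjective φ) (hker : ∀ x, φ x = 0 ↔ ∃ y, S.f y = x) :
    Nonempty (S.homology ≃+ A) := by
  have : IsIso S.homologyι := S.isIso_homologyι hg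
  let e := (asIso S.homologyι ≪≫ S.moduleCatOpcyclesIso).toLinearEquiv.toAddEquiv
  have hk : (LinearMap.range S.f.hom).toAddSubgroup = φ.ker := by
    ext x
    exact (hker x).symm
  let e₂ : (S.X₂ ⧸ LinearMap.range S.f.hom) ≃+ (S.X₂ ⧸ φ.ker) :=
    QuotientAddGroup.quotientAddEquivOfEq hk
  exact ⟨e.trans (e₂.trans (QuotientAddGroup.quotientKerEquivOfSurjective φ hφ))⟩

lemma ext_two_of_resolution [EnoughProjectives C]
    {P₀ P₁ P₂ M : C} [Projective P₀] [Projective P₁]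
    [Projective P₂] (f₁ : P₁ ⟶ P₀) (f₂ : P₂ ⟶ P₁) (p : P₀ ⟶ M)
    (h : f₂ ≫ f₁ = 0) (h' : f₁ ≫ p = 0) (hex : (ShortComplex.mk f₂ f₁ h).Exact)
    (hex' : (ShortComplex.mk f₁ p h').Exact) [Mono f₂] [Epi p] (Y : C)
    {A : Type*} [AddCommGroup A] (φ : (P₂ ⟶ Y) →+ A)
    (hφ : Function.Surjective φ) (hker : ∀ x, φ x = 0 ↔ ∃ y, f₂ ≫ y = x) :
    Nonempty ((((Ext ℤ C 2).obj (Opposite.op M)).obj Y) ≃+ A) := by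
  let P := koszulResolution f₁ f₂ p h h' hex hex'
  let K := P.complex.linearYonedaObj ℤ Y
  have e := (P.isoExt (R := ℤ) 2 Y ≪≫
    ShortComplex.homologyMapIso (K.isoSc' 1 2 3 (by simp) (by simp))).toLinearEquiv.toAddEquiv
  obtain ⟨e'⟩ := homology_addEquiv_of_g_zero (K.sc' 1 2 3) (by
      ext x
      exact (isZero_zero C).eq_of_src _ _) (A := A) φ hφ (by
      intro x
      have hd : ∀ y, (K.sc' 1 2 3).f y = f₂ ≫ y := by
        intro y
        have := koszulComplex_d f₁ f₂ h 1
        change (koszulComplex f₁ f₂ h).d 2 1 ≫ y = f₂ ≫ y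
        rw [this]
        rfl
      refine (hker x).trans ⟨?_, ?_⟩
      · rintro ⟨y, hy⟩
        exact ⟨y, (hd y).trans hy⟩
      · rintro ⟨y, hy⟩
        exact ⟨y, (hd y).symm.trans hy⟩)
  exact ⟨e.trans e'⟩

end Resolution

/-- `d ↦ (-d v₂, d v₁)`. -/
def koszulMap₂ {D : Type u} [Ring D] (v₁ v₂ : D) : D →ₗ[D] D × D :=
  (LinearMap.toSpanSingleton D D (-v₂)).prod (LinearMap.toSpanSingleton D D v₁)

/-- `(a, b) ↦ a v₁ + b v₂`. -/
def koszulMap₁ {D : Type u} [Ring D] (v₁ v₂ : D) : D × D →ₗ[D] D :=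
  (LinearMap.toSpanSingleton D D v₁).coprod (LinearMap.toSpanSingleton D D v₂)

lemma koszulMap₂_apply {D : Type u} [Ring D] (v₁ v₂ d : D) :
    koszulMap₂ v₁ v₂ d = (-(d * v₂), d * v₁) := by
  simp [koszulMap₂]

lemma koszulMap₁_apply {D : Type u} [Ring D] (v₁ v₂ : D) (x : D × D) :
    koszulMap₁ v₁ v₂ x = x.1 * v₁ + x.2 * v₂ := by
  simp [koszulMap₁]

lemma mem_koszul_closure {D : Type u} [Ring D] (v₁ v₂ x : D) :
    x ∈ AddSubgroup.closure
      {x : D | ∃ d : D, x = d * v₁ ∨ x = d * v₂ ∨ x = v₁ * d ∨ x = v₂ * d} ↔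
    ∃ a b : D, x - (v₁ * b - v₂ * a) ∈ (Submodule.span D {v₁, v₂} : Submodule D D) := by
  constructor
  · intro hx
    induction hx using AddSubgroup.closure_induction with
    | mem x hx =>
      obtain ⟨d, rfl | rfl | rfl | rfl⟩ := hx
      · exact ⟨0, 0, by
          rw [mul_zero, mul_zero, sub_zero, sub_zero]
          exact Submodule.smul_mem _ d (Submodule.subset_span (by simp))⟩
      · exact ⟨0, 0, by
          rw [mul_zero, mul_zero, sub_zero, sub_zero]
          exact Submodule.smul_mem _ d (Submodule.subset_span (by simp))⟩
      · exact ⟨0, d, by simp⟩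
      · exact ⟨-d, 0, by simp⟩
    | zero => exact ⟨0, 0, by simp⟩
    | add x y _ _ hx hy =>
      obtain ⟨a, b, h⟩ := hx
      obtain ⟨a', b', h'⟩ := hy
      refine ⟨a + a', b + b', ?_⟩
      convert add_mem h h' using 1
      noncomm_ring
    | neg x _ hx =>
      obtain ⟨a, b, h⟩ := hx
      refine ⟨-a, -b, ?_⟩
      convert neg_mem h using 1
      noncomm_ring
  · rintro ⟨a, b, h⟩
    obtain ⟨c, d, hcd⟩ := Submodule.mem_span_pair.1 h
    have hx : x = c * v₁ + d * v₂ + v₁ * b - v₂ * a := by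
      simp only [smul_eq_mul] at hcd
      rw [hcd]; abel
    rw [hx]
    refine sub_mem (add_mem (add_mem ?_ ?_) ?_) ?_ <;> apply AddSubgroup.subset_closure
    · exact ⟨c, by simp⟩
    · exact ⟨d, by simp⟩
    · exact ⟨b, by simp⟩
    · exact ⟨a, by simp⟩

/-- For commuting elements `v₁, v₂` of a ring `D` forming a regular sequence
(right multiplications injective, and right multiplication by `v₂` injective on
`D/Dv₁`), with `M = D/(Dv₁ + Dv₂)`, one has
`Ext²_D(M, M) ≅ D/(Dv₁ + Dv₂ + v₁D + v₂D)` as abelian groups. -/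
theorem ext_two_koszul_iso
    (D : Type u) [Ring D] (v₁ v₂ : D) (hcomm : v₁ * v₂ = v₂ * v₁)
    (hinj₁ : Function.Injective (fun d : D => d * v₁))
    (hinj₂ : Function.Injective (fun d : D => d * v₂))
    (hinj₂' : ∀ d : D, d * v₂ ∈ (Submodule.span D {v₁} : Submodule D D) →
      d ∈ (Submodule.span D {v₁} : Submodule D D)) :
    Nonempty
      ((((Ext ℤ (ModuleCat.{u} D) 2).obj
            (Opposite.op (ModuleCat.of D
              (D ⧸ (Submodule.span D {v₁, v₂} : Submodule D D))))).obj
          (ModuleCat.of D (D ⧸ (Submodule.span D {v₁, v₂} : Submodule D D)))) ≃+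
        (D ⧸ AddSubgroup.closure
          {x : D | ∃ d : D, x = d * v₁ ∨ x = d * v₂ ∨ x = v₁ * d ∨ x = v₂ * d})) := by
  have hsp₁ : ∀ x : D, x ∈ (Submodule.span D {v₁} : Submodule D D) ↔ ∃ a, a * v₁ = x :=
    fun x => Submodule.mem_span_singleton
  have hsp : ∀ x : D, x ∈ (Submodule.span D {v₁, v₂} : Submodule D D) ↔
      ∃ a b, a * v₁ + b * v₂ = x := fun x => Submodule.mem_span_pair
  set I := (Submodule.span D {v₁, v₂} : Submodule D D) with hI
  set N := AddSubgroup.closure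
    {x : D | ∃ d : D, x = d * v₁ ∨ x = d * v₂ ∨ x = v₁ * d ∨ x = v₂ * d} with hN
  have hIN : I.toAddSubgroup ≤ N := by
    intro x hx
    exact (mem_koszul_closure v₁ v₂ x).2 ⟨0, 0, by simpa using hx⟩
  let q : (D ⧸ I) →+ (D ⧸ N) := QuotientAddGroup.map I.toAddSubgroup N (AddMonoidHom.id D) hIN
  have hq : ∀ x : D, q (Submodule.Quotient.mk x) = QuotientAddGroup.mk x := fun x => rfl
  let φ : (ModuleCat.of D D ⟶ ModuleCat.of D (D ⧸ I)) →+ (D ⧸ N) :=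
    { toFun := fun f => q (f.hom (1 : D))
      map_zero' := by simp
      map_add' := by intro f g; simp }
  have hφ : ∀ f, φ f = q (f.hom (1 : D)) := fun f => rfl
  have hinjK : Function.Injective (koszulMap₂ v₁ v₂) := by
    intro x y hxy
    simp only [koszulMap₂_apply, Prod.mk.injEq] at hxy
    exact hinj₁ hxy.2
  have : Mono (ModuleCat.ofHom (koszulMap₂ v₁ v₂)) := (ModuleCat.mono_iff_injective _).2 hinjK
  have : Epi (ModuleCat.ofHom I.mkQ) :=
    (ModuleCat.epi_iff_surjective _).2 (Submodule.mkQ_surjective I)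
  refine ext_two_of_resolution (ModuleCat.ofHom (koszulMap₁ v₁ v₂))
    (ModuleCat.ofHom (koszulMap₂ v₁ v₂)) (ModuleCat.ofHom I.mkQ) ?_ ?_ ?_ ?_ _ φ ?_ ?_
  · rw [← ModuleCat.ofHom_comp, ← ModuleCat.ofHom_zero]
    congr 1
    ext
    simp [koszulMap₁_apply, koszulMap₂_apply, hcomm]
  · rw [← ModuleCat.ofHom_comp, ← ModuleCat.ofHom_zero]
    congr 1
    refine LinearMap.ext fun x => ?_
    change Submodule.Quotient.mk (koszulMap₁ v₁ v₂ x) = (0 : D ⧸ I)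
    rw [Submodule.Quotient.mk_eq_zero, hsp, koszulMap₁_apply]
    exact ⟨_, _, rfl⟩
  · rw [ShortComplex.moduleCat_exact_iff]
    intro (x : D × D) (hx : koszulMap₁ v₁ v₂ x = 0)
    change ∃ y, koszulMap₂ v₁ v₂ y = x
    obtain ⟨a, b⟩ := x
    rw [koszulMap₁_apply] at hx
    simp only at hx
    obtain ⟨c, rfl⟩ := (hsp₁ b).1 (hinj₂' b ((hsp₁ _).2
      ⟨-a, by rw [neg_mul]; exact neg_eq_of_add_eq_zero_right hx⟩))
    refine ⟨c, ?_⟩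
    rw [koszulMap₂_apply]
    congr 1
    apply hinj₁
    simp only
    rw [eq_neg_of_add_eq_zero_left hx, neg_mul, mul_assoc, mul_assoc, hcomm]
  · rw [ShortComplex.moduleCat_exact_iff]
    intro (x : D) (hx : Submodule.Quotient.mk x = (0 : D ⧸ I))
    change ∃ y, koszulMap₁ v₁ v₂ y = x
    rw [Submodule.Quotient.mk_eq_zero, hsp] at hx
    obtain ⟨a, b, h⟩ := hx
    exact ⟨(a, b), by rw [koszulMap₁_apply]; exact h⟩
  · intro y
    obtain ⟨d, rfl⟩ := QuotientAddGroup.mk_surjective y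
    refine ⟨ModuleCat.ofHom (LinearMap.toSpanSingleton D (D ⧸ I) (Submodule.Quotient.mk d)), ?_⟩
    rw [hφ, ← hq]
    simp
  · intro f
    rw [hφ]
    obtain ⟨m, hm⟩ := Submodule.Quotient.mk_surjective I (f.hom (1 : D))
    rw [← hm, hq, QuotientAddGroup.eq_zero_iff, hN, mem_koszul_closure]
    constructor
    · rintro ⟨a, b, h⟩
      refine ⟨ModuleCat.ofHom ((LinearMap.toSpanSingleton D (D ⧸ I) (Submodule.Quotient.mk a)).coprod
        (LinearMap.toSpanSingleton D (D ⧸ I) (Submodule.Quotient.mk b))), ?_⟩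
      apply ModuleCat.hom_ext
      apply LinearMap.ext_ring
      rw [← hm]
      symm
      rw [← sub_eq_zero]
      rw [← Submodule.Quotient.mk_eq_zero I] at h
      rw [← h]
      simp [koszulMap₂_apply, ← Submodule.Quotient.mk_smul, sub_eq_add_neg, add_comm]
    · rintro ⟨y, rfl⟩
      obtain ⟨a, ha⟩ := Submodule.Quotient.mk_surjective I (y.hom ((1, 0) : D × D))
      obtain ⟨b, hb⟩ := Submodule.Quotient.mk_surjective I (y.hom ((0, 1) : D × D))
      refine ⟨a, b, ?_⟩
      rw [← hI, ← Submodule.Quotient.mk_eq_zero I, Submodule.Quotient.mk_sub, hm, sub_eq_zero]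
      have h1 : koszulMap₂ v₁ v₂ 1 = v₁ • ((0, 1) : D × D) - v₂ • ((1, 0) : D × D) := by
        simp [koszulMap₂_apply]
      change y.hom (koszulMap₂ v₁ v₂ 1) = _
      rw [h1]
      refine (map_sub y.hom _ _).trans ?_
      refine (congrArg₂ (· - ·) (map_smul y.hom v₁ _) (map_smul y.hom v₂ _)).trans ?_
      rw [← ha, ← hb]
      rfl
end
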